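/- Let (G,⊢,⊣,1,⁻¹) be a digroup with conjugation x∘y := x⊢(y⊣x⁻¹). Then (G,∘,1) is a pointed rack: for all x,y,z ∈ G, x∘(y∘z) = (x∘y)∘(x∘z); for each x ∈ G the map y ↦ x∘y is a bijection of G with inverse z ↦ x⁻¹∘z; and 1∘x = x and x∘1 = 1 for all x ∈ G. -/

import Mathlib

/-- A digroup: a set `G` with two associative operations `⊢` (`lhd`) and `⊣` (`dhv`),
a distinguished bar-unit `one`, and an inversion `inv`, satisfying the digroup
axioms (G1)–(G6). -/
class Digroup (G : Type*) where
  lhd : G → G → G           -- `x ⊢ y`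
  dhv : G → G → G           -- `x ⊣ y`
  one : G
  inv : G → G
  lhd_assoc : ∀ x y z : G, lhd (lhd x y) z = lhd x (lhd y z)
  dhv_assoc : ∀ x y z : G, dhv (dhv x y) z = dhv x (dhv y z)
  G2 : ∀ x y z : G, lhd x (dhv y z) = dhv (lhd x y) z
  G3 : ∀ x y z : G, dhv x (lhd y z) = dhv x (dhv y z)
  G4 : ∀ x y z : G, lhd (dhv x y) z = lhd (lhd x y) z
  one_lhd : ∀ x : G, lhd one x = x
  dhv_one : ∀ x : G, dhv x one = x
  lhd_inv : ∀ x : G, lhd x (inv x) = one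
  inv_dhv : ∀ x : G, dhv (inv x) x = one

open Digroup

/-- Conjugation in a digroup: `x ∘ y := x ⊢ (y ⊣ x⁻¹)`. -/
def Digroup.conj {G : Type*} [Digroup G] (x y : G) : G := lhd x (dhv y (inv x))

/-!
Conjugation is an action: `(x ⊢ y) ∘ z = (x ⊣ y) ∘ z = x ∘ (y ∘ z)` and `1 ∘ z = z`, because the
translations `x ⊢ ·` and `· ⊣ x⁻¹` commute and each is multiplicative in `x`. The axioms
`x⁻¹ ⊣ x = 1 = x ⊢ x⁻¹` then make `x⁻¹ ∘ ·` the inverse of `x ∘ ·`, and `x ∘ y = x ⊢ (y ⊣ x⁻¹)`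
acts as the composite of `x ∘ ·`, `y ∘ ·` and `x⁻¹ ∘ ·`, which is self-distributivity.
-/

namespace Digroup

variable {G : Type*} [Digroup G]

protected theorem inv_one : inv (one : G) = one := by
  rw [← one_lhd (inv one), lhd_inv]

theorem lhd_one_eq_one_dhv (x : G) : lhd x one = dhv one x := by
  rw [← inv_dhv x, G2, lhd_inv, inv_dhv]

theorem dhv_inv_cancel_right (x y : G) : dhv (dhv x y) (inv y) = x := by
  rw [dhv_assoc, ← G3, lhd_inv, dhv_one]

theorem inv_dhv_cancel_right (x y : G) : dhv (dhv x (inv y)) y = x := by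
  rw [dhv_assoc, inv_dhv, dhv_one]

theorem dhv_inv_eq_of_eq_dhv {x y z : G} (h : x = dhv z y) : dhv x (inv y) = z := by
  rw [h, dhv_inv_cancel_right]

theorem dhv_inv_dhv_rev (x y z : G) :
    dhv z (inv (dhv x y)) = dhv (dhv z (inv y)) (inv x) := by
  apply dhv_inv_eq_of_eq_dhv
  rw [← dhv_assoc, inv_dhv_cancel_right, inv_dhv_cancel_right]

theorem dhv_inv_lhd_rev (x y z : G) :
    dhv z (inv (lhd x y)) = dhv (dhv z (inv y)) (inv x) := by
  apply dhv_inv_eq_of_eq_dhv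
  rw [G3, ← dhv_assoc, inv_dhv_cancel_right, inv_dhv_cancel_right]

theorem one_conj (x : G) : conj one x = x := by
  rw [conj, one_lhd, Digroup.inv_one, dhv_one]

theorem conj_one (x : G) : conj x one = one := by
  rw [conj, G2, lhd_one_eq_one_dhv, dhv_inv_cancel_right]

theorem lhd_conj (x y z : G) : conj (lhd x y) z = conj x (conj y z) := by
  simp only [conj, dhv_inv_lhd_rev, lhd_assoc, G2]

theorem dhv_conj (x y z : G) : conj (dhv x y) z = conj x (conj y z) := by
  simp only [conj, dhv_inv_dhv_rev, G4, lhd_assoc, G2]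

theorem inv_conj_conj (x y : G) : conj (inv x) (conj x y) = y := by
  rw [← dhv_conj, inv_dhv, one_conj]

theorem conj_inv_conj (x y : G) : conj x (conj (inv x) y) = y := by
  rw [← lhd_conj, lhd_inv, one_conj]

theorem conj_bijective (x : G) : Function.Bijective (conj x) :=
  Function.bijective_iff_has_inverse.mpr ⟨conj (inv x), inv_conj_conj x, conj_inv_conj x⟩

theorem conj_self_distrib (x y z : G) :
    conj x (conj y z) = conj (conj x y) (conj x z) := by
  symm
  calc conj (conj x y) (conj x z)
      = conj (lhd x (dhv y (inv x))) (conj x z) := rfl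
    _ = conj x (conj y (conj (inv x) (conj x z))) := by rw [lhd_conj, dhv_conj]
    _ = conj x (conj y z) := by rw [inv_conj_conj]

end Digroup

/-- In a digroup, conjugation makes `(G, ∘, 1)` a pointed rack:
`∘` is left self-distributive, each left translation `y ↦ x∘y` is a bijection with
inverse `z ↦ x⁻¹∘z`, and `1∘x = x`, `x∘1 = 1`. -/
theorem digroup_conj_rack {G : Type*} [Digroup G] :
    (∀ x y z : G, conj x (conj y z) = conj (conj x y) (conj x z)) ∧
    (∀ x y : G, conj (inv x) (conj x y) = y ∧ conj x (conj (inv x) y) = y) ∧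
    (∀ x : G, Function.Bijective (fun y : G => conj x y)) ∧
    (∀ x : G, conj one x = x) ∧
    (∀ x : G, conj x one = one) := by
  exact ⟨conj_self_distrib, fun x y => ⟨inv_conj_conj x y, conj_inv_conj x y⟩,
    conj_bijective, one_conj, conj_one⟩
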